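/- arXiv:2206.00650 — 3 statements merged into one kernel-verified Lean document; each statement's English description precedes it below -/
import Mathlib

section
/- For complex numbers t,u,v,w, define E = (t²u² + t²v² + u²w² + v²w² + 4tuvw)/(2(tu+vw)(tv+uw)), F = (t⁴+u⁴+v⁴+w⁴ − 2t²w² − 2u²v²)/((t²+u²−v²−w²)(t²−u²+v²−w²)), C = (t²u² + t²v² + u²w² + v²w² − 4tuvw)/(2(tu−vw)(tv−uw)), and D = ((t²−w²)²(u²−v²)² √((t²+u²+v²+w²)(t²−u²−v²+w²)(t²w²−u²v²)))/((t²+u²−v²−w²)(t²−u²+v²−w²)(t²u²−v²w²)(t²v²−u²w²)). Then C² − D² + E² + F² − 2CEF = 1. -/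
theorem stmt3_key (a b c d : ℂ) :
    (4 * (a^2 + b^2 + c^2 + d^2 - 2*a*d - 2*b*c) * ((a*b - c*d) * (a*c - b*d))
      - ((a + b - c - d) * (a - b + c - d)) * (((a + d) * (b + c))^2 - 16*a*b*c*d))^2
    - ((a + b - c - d) * (a - b + c - d))^2 * ((a - d)^4 * (b - c)^4)
    = 16 * ((a - d)^4 * (b - c)^4)
      * ((a + b + c + d) * (a - b - c + d) * (a*d - b*c)) := by
  ring

theorem stmt3 (t u v w E F C D s : ℂ)
    (h1 : 2 * (t*u + v*w) * (t*v + u*w) ≠ 0)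
    (h2 : (t^2 + u^2 - v^2 - w^2) * (t^2 - u^2 + v^2 - w^2) ≠ 0)
    (h3 : 2 * (t*u - v*w) * (t*v - u*w) ≠ 0)
    (h4 : (t^2 + u^2 - v^2 - w^2) * (t^2 - u^2 + v^2 - w^2) * (t^2*u^2 - v^2*w^2) * (t^2*v^2 - u^2*w^2) ≠ 0)
    (hs : s^2 = (t^2 + u^2 + v^2 + w^2) * (t^2 - u^2 - v^2 + w^2) * (t^2*w^2 - u^2*v^2))
    (hE : E = (t^2*u^2 + t^2*v^2 + u^2*w^2 + v^2*w^2 + 4*t*u*v*w) / (2 * (t*u + v*w) * (t*v + u*w)))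
    (hF : F = (t^4 + u^4 + v^4 + w^4 - 2*t^2*w^2 - 2*u^2*v^2) /
      ((t^2 + u^2 - v^2 - w^2) * (t^2 - u^2 + v^2 - w^2)))
    (hC : C = (t^2*u^2 + t^2*v^2 + u^2*w^2 + v^2*w^2 - 4*t*u*v*w) / (2 * (t*u - v*w) * (t*v - u*w)))
    (hD : D = ((t^2 - w^2)^2 * (u^2 - v^2)^2 * s) /
      ((t^2 + u^2 - v^2 - w^2) * (t^2 - u^2 + v^2 - w^2) * (t^2*u^2 - v^2*w^2) * (t^2*v^2 - u^2*w^2))) :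
    C^2 - D^2 + E^2 + F^2 - 2*C*E*F = 1 := by
  have e2 : E^2 - 1 = ((t^2 - w^2)^2 * (u^2 - v^2)^2) / (2 * (t*u + v*w) * (t*v + u*w))^2 := by
    rw [hE, div_pow, eq_div_iff (pow_ne_zero 2 h1), sub_mul, div_mul_cancel₀ _ (pow_ne_zero 2 h1)]
    ring
  have c2 : C^2 - 1 = ((t^2 - w^2)^2 * (u^2 - v^2)^2) / (2 * (t*u - v*w) * (t*v - u*w))^2 := by
    rw [hC, div_pow, eq_div_iff (pow_ne_zero 2 h3), sub_mul, div_mul_cancel₀ _ (pow_ne_zero 2 h3)]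
    ring
  have key := stmt3_key (t^2) (u^2) (v^2) (w^2)
  rw [← hs] at key
  obtain ⟨K, hK⟩ : ∃ K, K = (t^2*u^2 - v^2*w^2) * (t^2*v^2 - u^2*w^2) := ⟨_, rfl⟩
  obtain ⟨P, hP⟩ : ∃ P, P = (t^2 + u^2 - v^2 - w^2) * (t^2 - u^2 + v^2 - w^2) := ⟨_, rfl⟩
  have hPK : P * K ≠ 0 := by
    rw [hP, hK, ← mul_assoc]; exact h4
  have hP0 : P ≠ 0 := left_ne_zero_of_mul hPK
  have hK0 : K ≠ 0 := right_ne_zero_of_mul hPK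
  have hKK : (2 * (t*u - v*w) * (t*v - u*w)) * (2 * (t*u + v*w) * (t*v + u*w)) = 4 * K := by
    rw [hK]; ring
  have hce : (C^2 - 1) * (E^2 - 1) = ((t^2 - w^2)^4 * (u^2 - v^2)^4) / (4 * K)^2 := by
    rw [c2, e2, div_mul_div_comm, ← hKK, mul_pow (2 * (t*u - v*w) * (t*v - u*w)) (2 * (t*u + v*w) * (t*v + u*w)) 2]
    congr 1; ring
  have hCE : C * E = (((t^2 + w^2) * (u^2 + v^2))^2 - 16*t^2*u^2*v^2*w^2) / (4 * K) := by
    rw [hC, hE, div_mul_div_comm, hKK]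
    congr 1; ring
  have hF' : F = ((t^2)^2 + (u^2)^2 + (v^2)^2 + (w^2)^2 - 2*t^2*w^2 - 2*u^2*v^2) / P := by
    rw [hF, hP]; congr 1; ring
  have hD' : D^2 = ((t^2 - w^2)^4 * (u^2 - v^2)^4 * s^2) / (P * K)^2 := by
    rw [hD, hP, hK, div_pow]; congr 1 <;> ring
  rw [← hP, ← hK] at key
  have main : (F - C * E)^2 - (C^2 - 1) * (E^2 - 1) - D^2 = 0 := by
    rw [hce, hCE, hF', hD']
    generalize ((t^2)^2 + (u^2)^2 + (v^2)^2 + (w^2)^2 - 2*t^2*w^2 - 2*u^2*v^2) = G at *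
    generalize (((t^2 + w^2) * (u^2 + v^2))^2 - 16*t^2*u^2*v^2*w^2) = T at *
    generalize ((t^2 - w^2)^4 * (u^2 - v^2)^4) = Q at *
    clear * - key hP0 hK0
    field_simp
    linear_combination key
  linear_combination main
end

section
/- Let a,b,c,d be complex numbers and define A₁ = (b⁴+c⁴−a⁴−d⁴)/(a²d²−b²c²), B₁ = (a⁴+c⁴−b⁴−d⁴)/(b²d²−a²c²), C₁ = (a⁴+b⁴−c⁴−d⁴)/(c²d²−a²b²), and D₁ = abcd(a²+d²−b²−c²)(b²+d²−a²−c²)(c²+d²−a²−b²)(a²+b²+c²+d²)/((a²d²−b²c²)(b²d²−a²c²)(c²d²−a²b²)). Suppose a² = t²+u²+v²+w², b² = 2(tw+uv), c² = t²−u²−v²+w², d² = 2(tw−uv) for some complex t,u,v,w making all denominators nonzero. Then A₁² + B₁² + C₁² − D₁² − A₁B₁C₁ = 4. -/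
theorem stmt4 (a b c d t u v w A₁ B₁ C₁ D₁ : ℂ)
    (ha : a^2 = t^2 + u^2 + v^2 + w^2)
    (hb : b^2 = 2 * (t*w + u*v))
    (hc : c^2 = t^2 - u^2 - v^2 + w^2)
    (hd : d^2 = 2 * (t*w - u*v))
    (h1 : a^2*d^2 - b^2*c^2 ≠ 0)
    (h2 : b^2*d^2 - a^2*c^2 ≠ 0)
    (h3 : c^2*d^2 - a^2*b^2 ≠ 0)
    (hA : A₁ = (b^4 + c^4 - a^4 - d^4) / (a^2*d^2 - b^2*c^2))
    (hB : B₁ = (a^4 + c^4 - b^4 - d^4) / (b^2*d^2 - a^2*c^2))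
    (hC : C₁ = (a^4 + b^4 - c^4 - d^4) / (c^2*d^2 - a^2*b^2))
    (hD : D₁ = a*b*c*d * (a^2 + d^2 - b^2 - c^2) * (b^2 + d^2 - a^2 - c^2) *
      (c^2 + d^2 - a^2 - b^2) * (a^2 + b^2 + c^2 + d^2) /
      ((a^2*d^2 - b^2*c^2) * (b^2*d^2 - a^2*c^2) * (c^2*d^2 - a^2*b^2))) :
    A₁^2 + B₁^2 + C₁^2 - D₁^2 - A₁*B₁*C₁ = 4 := by
  have e4 : ∀ x : ℂ, x^4 = (x^2)^2 := fun x => by ring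
  have hD2 : D₁^2 = a^2*b^2*c^2*d^2 * ((a^2 + d^2 - b^2 - c^2) * (b^2 + d^2 - a^2 - c^2) *
      (c^2 + d^2 - a^2 - b^2) * (a^2 + b^2 + c^2 + d^2))^2 /
      ((a^2*d^2 - b^2*c^2) * (b^2*d^2 - a^2*c^2) * (c^2*d^2 - a^2*b^2))^2 := by
    rw [hD, div_pow]
    congr 1
    ring
  rw [hD2, hA, hB, hC]
  simp only [e4]
  clear hD2 hA hB hC hD ha hb hc hd
  generalize a^2 = p at *
  generalize b^2 = q at *
  generalize c^2 = r at *
  generalize d^2 = s at *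
  generalize hx : p*s - q*r = x at *
  generalize hy : q*s - p*r = y at *
  generalize hz : r*s - p*q = z at *
  field_simp
  subst hx hy hz
  ring
end

section
/- Suppose C² − D² + E² + F² − 2CEF = 1 with E² ≠ 1 and C² ≠ 1. Define b = (CF−E)/√((C²−1)(E²−1)), b₁ = D/√((C²−1)(E²−1)), c₁ = (CE−F)/√((C²−1)(E²−1)), a = (C²−1)/√((C²−1)(E²−1)), c = CD/√((C²−1)(E²−1)), and G(p,q) = F(1+p²q²) − C(p²+q²) + 2Dpq, Δ(x)² = 1 − 2Ex² + x⁴. Then for all complex p, q: (b(1+p²q²) − a(p²+q²) + 2cpq)²/4 − (G(p,q)² − Δ(p)²Δ(q)²)/(4(E²−1)) = (b₁(1+p²q²)/2 − c₁pq)². -/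
theorem stmt7 (C D E F r : ℂ)
    (hconstraint : C^2 - D^2 + E^2 + F^2 - 2*C*E*F = 1)
    (hE : E^2 ≠ 1) (hC : C^2 ≠ 1)
    (hr : r^2 = (C^2 - 1) * (E^2 - 1)) (hr0 : r ≠ 0) :
    ∀ p q : ℂ,
      (((C*F - E)/r) * (1 + p^2*q^2) - ((C^2 - 1)/r) * (p^2 + q^2) + 2 * ((C*D)/r) * p * q)^2 / 4
      - ((F*(1 + p^2*q^2) - C*(p^2 + q^2) + 2*D*p*q)^2
          - (1 - 2*E*p^2 + p^4) * (1 - 2*E*q^2 + q^4)) / (4 * (E^2 - 1))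
      = ((D/r) * (1 + p^2*q^2) / 2 - ((C*E - F)/r) * p * q)^2 := by 
  intro p q
  have hE' : E^2 - 1 ≠ 0 := sub_ne_zero.mpr hE
  have h4 : (4 : ℂ) * (E^2 - 1) ≠ 0 := mul_ne_zero (by norm_num) hE'
  have key : ∀ N : ℂ, N / (4 * (E^2 - 1)) = (C^2 - 1) * N / (4 * r^2) := by
    intro N
    rw [div_eq_div_iff h4 (mul_ne_zero (by norm_num) (pow_ne_zero 2 hr0)), hr]
    ring
  rw [key]
  field_simp
  linear_combination 4 * ((1 + p^2*q^2)^2 - 4*p^2*q^2) * hconstraint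
end
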